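/- Let R = ⊕_{i≥0} R_i be a standard graded algebra over a field K (i.e., a commutative graded K-algebra with R_0 = K that is generated by R_1 as a K-algebra, with each R_i finite-dimensional over K), and let d_i = dim_K R_i be its Hilbert function. Then d_0 = 1 and d_{i+1} ≤ d_i^⟨i⟩ for all i ≥ 1. -/

import Mathlib

/-- `macaulay h a` is the Macaulay operator `a ↦ a^⟨h⟩`, computed via the greedy
construction of the `h`-binomial representation of `a`: writing
`a = C(a_h,h) + C(a_{h-1},h-1) + ⋯ + C(a_1,1)` with `a_h > a_{h-1} > ⋯ > a_1 ≥ 0`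
(where `a_h` is the largest integer with `C(a_h,h) ≤ a`, and so on), one sets
`a^⟨h⟩ = C(a_h+1,h+1) + C(a_{h-1}+1,h) + ⋯ + C(a_1+1,2)`, and `0^⟨h⟩ = 0`. -/
def macaulay : ℕ → ℕ → ℕ
  | 0, _ => 0
  | h + 1, a =>
    if a = 0 then 0
    else
      let m := Nat.findGreatest (fun k => Nat.choose k (h + 1) ≤ a) (a + h + 1)
      Nat.choose (m + 1) (h + 2) + macaulay h (a - Nat.choose m (h + 1))

/-!
Among the monomials in a finite spanning set of `V = R_1`, call one standard if it is not a linear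
combination of lexicographically smaller monomials of the same degree. The standard monomials of
degree `i` form a basis of `V ^ i`, and a divisor of a standard monomial is standard, so
the shadow of the family of degree `i + 1` lies in the family of degree `i`. It remains to bound a
family `F` of multisets in terms of its shadow `∂F`.

Compressing `F` does not enlarge its shadow, so `F` may be taken to be shifted towards a letter
`x`. Then `m ↦ x m` maps `∂F` bijectively onto the members of `F` containing `x`, so `|F|` is `|∂F|`
plus the number of members avoiding `x`. If `|∂F| ≤ ∑ C(a_j, j)`, then at most `∑ C(a_j, j + 1)`
members avoid `x`, and Pascal's rule gives `|F| ≤ ∑ C(a_j + 1, j + 1)`. The bound on the members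
avoiding `x` is an induction on `|F|`: their shadow lies in the part of `∂F` avoiding `x`, which has
at most `∑ C(a_j - 1, j)` elements by the same induction, as in Green's hyperplane restriction
theorem. The induction goes through because it allows arbitrary `a_j`, not only those of a binomial
representation.

The sums below run over `j ∈ {0, …, k - 1}`, so `a j` is `a_{j+1}` in this notation.
-/

open scoped Finset

lemma min_card_le_card_filter_mem_or_succ_mem {E : Finset ℕ} {c : ℕ}
    (hE : E ⊆ Finset.range (c + 2)) :
    min #E (c + 1) ≤ #{t ∈ Finset.range (c + 1) | t ∈ E ∨ t + 1 ∈ E} := by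
  obtain ⟨g, hgc, hg⟩ : ∃ g ≤ c + 1, min #E (c + 1) ≤ #(E.erase g) := by
    by_cases hfull : Finset.range (c + 2) ⊆ E
    · refine ⟨c + 1, le_rfl, ?_⟩
      have hcard := Finset.card_le_card hfull
      have herase := Finset.pred_card_le_card_erase (s := E) (a := c + 1)
      rw [Finset.card_range] at hcard
      omega
    · obtain ⟨g, hg, hgE⟩ := Finset.not_subset.1 hfull
      refine ⟨g, Nat.lt_succ_iff.1 (Finset.mem_range.1 hg), ?_⟩
      rw [Finset.erase_eq_of_notMem hgE]
      exact min_le_left _ _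
  -- Keep the numbers below `g` and lower those above `g` by one.
  refine hg.trans (Finset.card_le_card_of_injOn (fun t => if t < g then t else t - 1) ?_ ?_)
  · intro t ht
    obtain ⟨htg, htE⟩ := Finset.mem_erase.1 ht
    have htc := Finset.mem_range.1 (hE htE)
    rcases htg.lt_or_gt with hlt | hgt
    · simp only [if_pos hlt, Finset.coe_filter, Finset.mem_range, Set.mem_ofPred_eq]
      exact ⟨by omega, Or.inl htE⟩
    · simp only [if_neg hgt.not_gt, Finset.coe_filter, Finset.mem_range, Set.mem_ofPred_eq]
      exact ⟨by omega, Or.inr (by rwa [Nat.sub_add_cancel (by omega)])⟩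
  · intro s hs t ht hst
    have hsg := (Finset.mem_erase.1 hs).1
    have htg := (Finset.mem_erase.1 ht).1
    simp only at hst
    grind

lemma choose_le_choose_pred_add (n j : ℕ) :
    n.choose (j + 1) ≤ (n - 1).choose (j + 1) + (n - 1).choose j := by
  cases n with
  | zero => simp
  | succ n => rw [Nat.choose_succ_succ, Nat.add_sub_cancel, add_comm]

section MultisetShadow

variable {α : Type*} [DecidableEq α]

/-- The shadow of a family `F` of multisets: all multisets obtained by erasing one element from a
member of `F`. It is the multiset analogue of `Finset.shadow`. -/
def multisetShadow (F : Finset (Multiset α)) : Finset (Multiset α) :=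
  F.biUnion fun m => m.toFinset.image m.erase

lemma mem_multisetShadow {F : Finset (Multiset α)} {n : Multiset α} :
    n ∈ multisetShadow F ↔ ∃ z, z ::ₘ n ∈ F := by
  simp only [multisetShadow, Finset.mem_biUnion, Finset.mem_image, Multiset.mem_toFinset]
  constructor
  · rintro ⟨m, hm, z, hz, rfl⟩
    exact ⟨z, by rwa [Multiset.cons_erase hz]⟩
  · rintro ⟨z, hz⟩
    exact ⟨_, hz, z, Multiset.mem_cons_self _ _, Multiset.erase_cons_head _ _⟩

lemma card_eq_of_mem_multisetShadow {F : Finset (Multiset α)} {c : ℕ}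
    (hF : ∀ m ∈ F, m.card = c + 1) : ∀ n ∈ multisetShadow F, n.card = c := by
  intro n hn
  obtain ⟨z, hz⟩ := mem_multisetShadow.1 hn
  simpa using hF _ hz

lemma multisetShadow_nonempty {F : Finset (Multiset α)} {c : ℕ}
    (hF : ∀ m ∈ F, m.card = c + 1) (hne : F.Nonempty) : (multisetShadow F).Nonempty := by
  obtain ⟨m, hm⟩ := hne
  obtain ⟨z, n, rfl, -⟩ := Multiset.card_eq_succ_iff.1 (hF m hm)
  exact ⟨n, mem_multisetShadow.2 ⟨z, hm⟩⟩

lemma multisetShadow_filter_notMem_subset (x : α) (F : Finset (Multiset α)) :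
    multisetShadow {m ∈ F | x ∉ m} ⊆ {n ∈ multisetShadow F | x ∉ n} := by
  intro n hn
  obtain ⟨z, hz⟩ := mem_multisetShadow.1 hn
  obtain ⟨hzF, hx⟩ := Finset.mem_filter.1 hz
  exact Finset.mem_filter.2
    ⟨mem_multisetShadow.2 ⟨z, hzF⟩, fun h => hx (Multiset.mem_cons_of_mem h)⟩

/-- A family `F` of multisets is shifted towards `x` if replacing an element of a member of `F`
by `x` always gives a member of `F`. -/
def IsShifted (x : α) (F : Finset (Multiset α)) : Prop :=
  ∀ y m, y ::ₘ m ∈ F → x ::ₘ m ∈ F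

lemma isShifted_multisetShadow {x : α} {F : Finset (Multiset α)} (hF : IsShifted x F) :
    IsShifted x (multisetShadow F) := by
  intro y m hm
  obtain ⟨z, hz⟩ := mem_multisetShadow.1 hm
  rw [Multiset.cons_swap] at hz
  exact mem_multisetShadow.2 ⟨z, Multiset.cons_swap x z m ▸ hF _ _ hz⟩

lemma IsShifted.card_eq_card_multisetShadow_add {x : α} {F : Finset (Multiset α)}
    (hF : IsShifted x F) : #F = #(multisetShadow F) + #{m ∈ F | x ∉ m} := by
  have himage : {m ∈ F | x ∈ m} = (multisetShadow F).image (x ::ₘ ·) := by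
    ext m
    simp only [Finset.mem_filter, Finset.mem_image, mem_multisetShadow]
    constructor
    · rintro ⟨hm, hx⟩
      obtain ⟨n, rfl⟩ := Multiset.exists_cons_of_mem hx
      exact ⟨n, ⟨x, hm⟩, rfl⟩
    · rintro ⟨n, ⟨z, hz⟩, rfl⟩
      exact ⟨hF _ _ hz, Multiset.mem_cons_self _ _⟩
  rw [← Finset.card_filter_add_card_filter_not (s := F) (x ∈ ·), himage,
    Finset.card_image_of_injective _ fun _ _ => (Multiset.cons_inj_right x).1]

section Compression

/-- The multiset `m` with every occurrence of `y` replaced by `x`. The fibres of this map are the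
lines along which families are compressed. -/
def mergeLetter (x y : α) (m : Multiset α) : Multiset α :=
  m.map (Function.update id y x)

/-- The multiset `u` with `e` occurrences of `x` replaced by `y`, for `e ≤ u.count x`. This inverts
`mergeLetter x y` once the multiplicity `e` of `y` is known. -/
def splitLetter (x y : α) (u : Multiset α) (e : ℕ) : Multiset α :=
  u - Multiset.replicate e x + Multiset.replicate e y

/-- The multiplicities of `y` in those members of `F` that `mergeLetter x y` sends to `u`, where
`u` is a multiset without `y`. -/
def exponents (x y : α) (F : Finset (Multiset α)) (u : Multiset α) : Finset ℕ :=
  {e ∈ Finset.range (u.count x + 1) | splitLetter x y u e ∈ F}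

/-- Moves a member `m` of `F` down its fibre under `mergeLetter x y`: if `m` has the `e`-th smallest
multiplicity of `y` among the members of `F` in this fibre, counting from `0`, then the new
multiplicity of `y` is `e`. -/
def pushDown (x y : α) (F : Finset (Multiset α)) (m : Multiset α) : Multiset α :=
  splitLetter x y (mergeLetter x y m)
    (Nat.count (· ∈ exponents x y F (mergeLetter x y m)) (m.count y))

/-- The compression of `F` in direction `y → x`: in each fibre of `mergeLetter x y`, the members
of `F` are replaced by equally many multisets, those in which `y` is least frequent. -/
def compress (x y : α) (F : Finset (Multiset α)) : Finset (Multiset α) :=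
  F.image (pushDown x y F)

lemma mergeLetter_cons (x y z : α) (m : Multiset α) :
    mergeLetter x y (z ::ₘ m) = (if z = y then x else z) ::ₘ mergeLetter x y m := by
  simp [mergeLetter, Function.update_apply]

lemma card_mergeLetter (x y : α) (m : Multiset α) : (mergeLetter x y m).card = m.card :=
  Multiset.card_map _ _

lemma splitLetter_cons {x y : α} {u : Multiset α} {e : ℕ} (he : e ≤ u.count x) (z : α) :
    splitLetter x y (z ::ₘ u) e = z ::ₘ splitLetter x y u e := by
  rw [splitLetter, Multiset.cons_sub_of_le _ (Multiset.le_count_iff_replicate_le.1 he),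
    Multiset.cons_add, splitLetter]

lemma splitLetter_cons_succ (x y : α) (u : Multiset α) (e : ℕ) :
    splitLetter x y (x ::ₘ u) (e + 1) = y ::ₘ splitLetter x y u e := by
  simp [splitLetter, Multiset.replicate_succ, Multiset.sub_cons]

lemma mem_exponents {x y : α} {F : Finset (Multiset α)} {u : Multiset α} {e : ℕ} :
    e ∈ exponents x y F u ↔ e ≤ u.count x ∧ splitLetter x y u e ∈ F := by
  simp [exponents]

variable {x y : α} (hxy : x ≠ y)
include hxy

lemma count_mergeLetter (z : α) (m : Multiset α) :
    (mergeLetter x y m).count z =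
      if z = y then 0 else if z = x then m.count x + m.count y else m.count z := by
  induction m using Multiset.induction_on with
  | empty => simp [mergeLetter]
  | cons w m ih =>
    simp only [mergeLetter_cons, Multiset.count_cons, ih]
    grind

lemma count_left_mergeLetter (m : Multiset α) :
    (mergeLetter x y m).count x = m.count x + m.count y := by
  simp [count_mergeLetter hxy, hxy]

lemma splitLetter_mergeLetter_count (m : Multiset α) :
    splitLetter x y (mergeLetter x y m) (m.count y) = m := by
  ext z
  simp only [splitLetter, Multiset.count_add, Multiset.count_sub, Multiset.count_replicate,
    count_mergeLetter hxy]
  grind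

lemma count_splitLetter_mergeLetter (m : Multiset α) (e : ℕ) :
    (splitLetter x y (mergeLetter x y m) e).count y = e := by
  simp [splitLetter, count_mergeLetter hxy, Multiset.count_replicate]

lemma mergeLetter_splitLetter_mergeLetter {m : Multiset α} {e : ℕ}
    (he : e ≤ (mergeLetter x y m).count x) :
    mergeLetter x y (splitLetter x y (mergeLetter x y m) e) = mergeLetter x y m := by
  ext z
  simp only [splitLetter, Multiset.count_add, Multiset.count_sub, Multiset.count_replicate,
    count_mergeLetter hxy] at he ⊢
  grind

lemma count_mem_exponents {F : Finset (Multiset α)} {m : Multiset α} :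
    m.count y ∈ exponents x y F (mergeLetter x y m) ↔ m ∈ F := by
  rw [mem_exponents, splitLetter_mergeLetter_count hxy, count_left_mergeLetter hxy]
  simp

lemma count_pushDown (F : Finset (Multiset α)) (m : Multiset α) :
    (pushDown x y F m).count y =
      Nat.count (· ∈ exponents x y F (mergeLetter x y m)) (m.count y) :=
  count_splitLetter_mergeLetter hxy _ _

lemma count_pushDown_le (F : Finset (Multiset α)) (m : Multiset α) :
    (pushDown x y F m).count y ≤ m.count y :=
  (count_pushDown hxy F m).trans_le (Nat.count_le _)

lemma mergeLetter_pushDown (F : Finset (Multiset α)) (m : Multiset α) :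
    mergeLetter x y (pushDown x y F m) = mergeLetter x y m := by
  refine mergeLetter_splitLetter_mergeLetter hxy ((Nat.count_le _).trans ?_)
  rw [count_left_mergeLetter hxy]
  exact Nat.le_add_left _ _

lemma card_pushDown (F : Finset (Multiset α)) (m : Multiset α) :
    (pushDown x y F m).card = m.card := by
  rw [← card_mergeLetter x y, mergeLetter_pushDown hxy, card_mergeLetter]

lemma injOn_pushDown (F : Finset (Multiset α)) : Set.InjOn (pushDown x y F) F := by
  intro m hm n hn h
  have hmerge : mergeLetter x y m = mergeLetter x y n := by
    rw [← mergeLetter_pushDown hxy F m, h, mergeLetter_pushDown hxy]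
  have hrank := congrArg (Multiset.count y) h
  rw [count_pushDown hxy, count_pushDown hxy, hmerge] at hrank
  have hcount : m.count y = n.count y :=
    Nat.count_injective (hmerge ▸ (count_mem_exponents hxy).2 hm)
      ((count_mem_exponents hxy).2 hn) hrank
  rw [← splitLetter_mergeLetter_count hxy m, hmerge, hcount, splitLetter_mergeLetter_count hxy]

lemma card_compress (F : Finset (Multiset α)) : #(compress x y F) = #F :=
  Finset.card_image_of_injOn (injOn_pushDown hxy F)

lemma card_eq_of_mem_compress {F : Finset (Multiset α)} {c : ℕ} (hF : ∀ m ∈ F, m.card = c) :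
    ∀ m ∈ compress x y F, m.card = c :=
  Finset.forall_mem_image.2 fun m hm => (card_pushDown hxy F m).trans (hF m hm)

lemma mem_compress {F : Finset (Multiset α)} {m : Multiset α} :
    m ∈ compress x y F ↔ m.count y < #(exponents x y F (mergeLetter x y m)) := by
  have hfin : (Set.ofPred (· ∈ exponents x y F (mergeLetter x y m))).Finite :=
    (exponents x y F _).finite_toSet
  have hcard : hfin.toFinset = exponents x y F (mergeLetter x y m) := by ext; simp
  rw [compress, Finset.mem_image, ← hcard]
  constructor
  · rintro ⟨n, hn, rfl⟩
    rw [count_pushDown hxy]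
    simp only [mergeLetter_pushDown hxy] at hfin ⊢
    exact Nat.count_lt_card hfin ((count_mem_exponents hxy).2 hn)
  · intro hm
    have hnth := Nat.nth_mem_of_lt_card hfin hm
    have hrank := Nat.count_nth_of_lt_card_finite hfin hm
    obtain ⟨hle, hF⟩ := mem_exponents.1 hnth
    refine ⟨_, hF, ?_⟩
    rw [pushDown, mergeLetter_splitLetter_mergeLetter hxy hle, count_splitLetter_mergeLetter hxy,
      hrank, splitLetter_mergeLetter_count hxy]

omit hxy in
lemma card_exponents_cons_le {z : α} (hz : z ≠ x) (F : Finset (Multiset α)) (u : Multiset α) :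
    #(exponents x y F (z ::ₘ u)) ≤ #(exponents x y (multisetShadow F) u) := by
  refine Finset.card_le_card fun e he => ?_
  rw [mem_exponents, Multiset.count_cons_of_ne hz.symm] at he
  rw [splitLetter_cons he.1] at he
  exact mem_exponents.2 ⟨he.1, mem_multisetShadow.2 ⟨z, he.2⟩⟩

omit hxy in
lemma min_card_exponents_cons_le (F : Finset (Multiset α)) (u : Multiset α) :
    min #(exponents x y F (x ::ₘ u)) (u.count x + 1) ≤
      #(exponents x y (multisetShadow F) u) := by
  have hsub : exponents x y F (x ::ₘ u) ⊆ Finset.range (u.count x + 2) := by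
    simp [exponents]
  refine (min_card_le_card_filter_mem_or_succ_mem hsub).trans (Finset.card_le_card fun e he => ?_)
  obtain ⟨hec, he⟩ := Finset.mem_filter.1 he
  have hle : e ≤ u.count x := Nat.lt_succ_iff.1 (Finset.mem_range.1 hec)
  refine mem_exponents.2 ⟨hle, mem_multisetShadow.2 ?_⟩
  rcases he with he | he
  · exact ⟨x, splitLetter_cons hle x ▸ (mem_exponents.1 he).2⟩
  · exact ⟨y, splitLetter_cons_succ x y u e ▸ (mem_exponents.1 he).2⟩

lemma multisetShadow_compress_subset (F : Finset (Multiset α)) :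
    multisetShadow (compress x y F) ⊆ compress x y (multisetShadow F) := by
  intro n hn
  obtain ⟨z, hz⟩ := mem_multisetShadow.1 hn
  rw [mem_compress hxy, mergeLetter_cons] at hz
  rw [mem_compress hxy]
  have hcount : n.count y < #(exponents x y F ((if z = y then x else z) ::ₘ mergeLetter x y n)) :=
    (Multiset.count_le_count_cons _ _ _).trans_lt hz
  by_cases hzx : (if z = y then x else z) = x
  · rw [hzx] at hcount
    have hle := count_left_mergeLetter hxy n
    exact (lt_min hcount (by omega)).trans_le (min_card_exponents_cons_le F _)
  · exact hcount.trans_le (card_exponents_cons_le hzx F _)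

lemma card_multisetShadow_compress_le (F : Finset (Multiset α)) :
    #(multisetShadow (compress x y F)) ≤ #(multisetShadow F) :=
  (Finset.card_le_card (multisetShadow_compress_subset hxy F)).trans_eq (card_compress hxy _)

lemma count_pushDown_lt {F : Finset (Multiset α)} {m : Multiset α} (hm : x ::ₘ m ∉ F) :
    (pushDown x y F (y ::ₘ m)).count y < (y ::ₘ m).count y := by
  refine (count_pushDown_le hxy F _).lt_of_ne fun h => hm ?_
  rw [count_pushDown hxy, Nat.count_iff_forall] at h
  have hmem := h (m.count y) (by simp)
  have hmerge : mergeLetter x y (y ::ₘ m) = mergeLetter x y (x ::ₘ m) := by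
    simp [mergeLetter_cons]
  rwa [hmerge, ← Multiset.count_cons_of_ne hxy.symm m, count_mem_exponents hxy] at hmem

lemma count_left_pushDown_add (F : Finset (Multiset α)) (m : Multiset α) :
    (pushDown x y F m).count x + (pushDown x y F m).count y = m.count x + m.count y := by
  rw [← count_left_mergeLetter hxy, mergeLetter_pushDown hxy, count_left_mergeLetter hxy]

lemma sum_count_lt_sum_count_compress {F : Finset (Multiset α)} {m : Multiset α}
    (hm : y ::ₘ m ∈ F) (hm' : x ::ₘ m ∉ F) :
    ∑ n ∈ F, n.count x < ∑ n ∈ compress x y F, n.count x := by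
  rw [compress, Finset.sum_image (injOn_pushDown hxy F)]
  refine Finset.sum_lt_sum (fun n _ => ?_) ⟨_, hm, ?_⟩
  · have hle := count_pushDown_le hxy F n
    have hadd := count_left_pushDown_add hxy F n
    omega
  · have hlt := count_pushDown_lt hxy hm'
    have hadd := count_left_pushDown_add hxy F (y ::ₘ m)
    omega

end Compression

lemma exists_isShifted (x : α) {c : ℕ} {F : Finset (Multiset α)} (hF : ∀ m ∈ F, m.card = c) :
    ∃ G : Finset (Multiset α), IsShifted x G ∧ (∀ m ∈ G, m.card = c) ∧ #G = #F ∧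
      #(multisetShadow G) ≤ #(multisetShadow F) := by
  induction hN : #F * c - ∑ n ∈ F, n.count x using Nat.strong_induction_on generalizing F with
  | _ N ih =>
    by_cases hshift : IsShifted x F
    · exact ⟨F, hshift, hF, rfl, le_rfl⟩
    obtain ⟨y, m, hm, hm'⟩ : ∃ y m, y ::ₘ m ∈ F ∧ x ::ₘ m ∉ F := by
      simpa [IsShifted] using hshift
    have hxy : x ≠ y := by
      rintro rfl
      exact hm' hm
    have hsized := card_eq_of_mem_compress hxy hF
    have hbound : ∑ n ∈ compress x y F, n.count x ≤ #(compress x y F) * c :=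
      Finset.sum_le_card_nsmul _ _ _ fun n hn => hsized n hn ▸ Multiset.count_le_card x n
    rw [card_compress hxy] at hbound
    have hlt := sum_count_lt_sum_count_compress hxy hm hm'
    obtain ⟨G, hG, hGc, hcard, hshadow⟩ := ih _ (by rw [card_compress hxy]; omega) hsized rfl
    exact ⟨G, hG, hGc, hcard.trans (card_compress hxy F),
      hshadow.trans (card_multisetShadow_compress_le hxy F)⟩

/-- Green's hyperplane restriction bound for shifted families, given Macaulay's bound one degree
lower. -/
lemma IsShifted.card_filter_notMem_le_sum_choose_pred {x : α} {k : ℕ} {F : Finset (Multiset α)}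
    (hF : IsShifted x F)
    (hshadow : ∀ a : ℕ → ℕ, #(multisetShadow F) ≤ ∑ j ∈ Finset.range k, (a j).choose (j + 1) →
      #{m ∈ F | x ∉ m} ≤ ∑ j ∈ Finset.range k, (a j).choose (j + 2))
    {a : ℕ → ℕ} (ha : #F ≤ ∑ j ∈ Finset.range (k + 1), (a j).choose (j + 1)) :
    #{m ∈ F | x ∉ m} ≤ ∑ j ∈ Finset.range (k + 1), (a j - 1).choose (j + 1) := by
  by_contra! hlt
  have hsplit := hF.card_eq_card_multisetShadow_add
  have hpascal : ∑ j ∈ Finset.range (k + 1), (a j).choose (j + 1) ≤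
      ∑ j ∈ Finset.range (k + 1), (a j - 1).choose (j + 1) +
        ∑ j ∈ Finset.range (k + 1), (a j - 1).choose j := by
    rw [← Finset.sum_add_distrib]
    exact Finset.sum_le_sum fun j _ => choose_le_choose_pred_add _ _
  rw [Finset.sum_range_succ' (fun j => (a j - 1).choose j), Nat.choose_zero_right] at hpascal
  have hsucc : ∑ j ∈ Finset.range (k + 1), (a j - 1).choose (j + 1) =
      ∑ j ∈ Finset.range k, (a (j + 1) - 1).choose (j + 2) + (a 0 - 1).choose 1 :=
    Finset.sum_range_succ' _ _
  have hle := hshadow (fun j => a (j + 1) - 1) (by omega)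
  omega

lemma card_le_sum_choose_of_forall_isShifted {c : ℕ} {F : Finset (Multiset α)}
    (hF : ∀ m ∈ F, m.card = c + 1) {k : ℕ} {a : ℕ → ℕ}
    (ha : #(multisetShadow F) ≤ ∑ j ∈ Finset.range k, (a j).choose (j + 1))
    (hshift : ∀ x, ∀ G : Finset (Multiset α), IsShifted x G → (∀ m ∈ G, m.card = c + 1) →
      #G = #F → #(multisetShadow G) ≤ ∑ j ∈ Finset.range k, (a j).choose (j + 1) →
      #{m ∈ G | x ∉ m} ≤ ∑ j ∈ Finset.range k, (a j).choose (j + 2)) :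
    #F ≤ ∑ j ∈ Finset.range k, (a j + 1).choose (j + 2) := by
  rcases F.eq_empty_or_nonempty with rfl | ⟨m, hm⟩
  · simp
  obtain ⟨x, -⟩ := Multiset.card_eq_succ_iff.1 (hF m hm)
  obtain ⟨G, hG, hGc, hcard, hshadow⟩ := exists_isShifted x hF
  calc #F = #(multisetShadow G) + #{m ∈ G | x ∉ m} := by
        rw [← hcard, hG.card_eq_card_multisetShadow_add]
    _ ≤ ∑ j ∈ Finset.range k, (a j).choose (j + 1) +
          ∑ j ∈ Finset.range k, (a j).choose (j + 2) :=
        Nat.add_le_add (hshadow.trans ha) (hshift x G hG hGc hcard (hshadow.trans ha))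
    _ = ∑ j ∈ Finset.range k, (a j + 1).choose (j + 2) := by
        rw [← Finset.sum_add_distrib]
        exact Finset.sum_congr rfl fun j _ => (Nat.choose_succ_succ _ _).symm

lemma IsShifted.card_filter_notMem_le_sum_choose {x : α} {k : ℕ} {F : Finset (Multiset α)}
    (hs : IsShifted x F) (hF : ∀ m ∈ F, m.card = k + 1) {a : ℕ → ℕ}
    (ha : #(multisetShadow F) ≤ ∑ j ∈ Finset.range k, (a j).choose (j + 1)) :
    #{m ∈ F | x ∉ m} ≤ ∑ j ∈ Finset.range k, (a j).choose (j + 2) := by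
  induction hN : #F using Nat.strong_induction_on generalizing x k F a with
  | _ N ih =>
  subst hN
  rcases Finset.eq_empty_or_nonempty {m ∈ F | x ∉ m} with hempty | hne
  · simp [hempty]
  have hshadow_pos := (multisetShadow_nonempty hF (hne.mono (Finset.filter_subset _ _))).card_pos
  have hsplit := hs.card_eq_card_multisetShadow_add
  have hne_pos := hne.card_pos
  cases k with
  | zero =>
    rw [Finset.sum_range_zero] at ha
    omega
  | succ k =>
    have hgreen : #{n ∈ multisetShadow F | x ∉ n} ≤
        ∑ j ∈ Finset.range (k + 1), (a j - 1).choose (j + 1) :=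
      (isShifted_multisetShadow hs).card_filter_notMem_le_sum_choose_pred
        (fun b hb => ih _ (by omega) (isShifted_multisetShadow hs)
          (card_eq_of_mem_multisetShadow hF) hb rfl) ha
    have hF' : ∀ m ∈ {m ∈ F | x ∉ m}, m.card = k + 2 := fun m hm =>
      hF m (Finset.mem_of_mem_filter m hm)
    calc #{m ∈ F | x ∉ m}
        ≤ ∑ j ∈ Finset.range (k + 1), (a j - 1 + 1).choose (j + 2) :=
          card_le_sum_choose_of_forall_isShifted hF'
            ((Finset.card_le_card (multisetShadow_filter_notMem_subset x F)).trans hgreen)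
            fun y G hG hGc hcard hGa => ih _ (by omega) hG hGc hGa rfl
      _ ≤ ∑ j ∈ Finset.range (k + 1), (a j).choose (j + 2) :=
          Finset.sum_le_sum fun j _ => by
            rcases Nat.eq_zero_or_pos (a j) with h | h
            · simp [h, Nat.choose_eq_zero_of_lt]
            · rw [Nat.sub_add_cancel h]

theorem card_le_sum_choose_of_card_multisetShadow_le {k : ℕ} {F : Finset (Multiset α)}
    (hF : ∀ m ∈ F, m.card = k + 1) {a : ℕ → ℕ}
    (ha : #(multisetShadow F) ≤ ∑ j ∈ Finset.range k, (a j).choose (j + 1)) :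
    #F ≤ ∑ j ∈ Finset.range k, (a j + 1).choose (j + 2) :=
  card_le_sum_choose_of_forall_isShifted hF ha fun _ _ hG hGc _ hGa =>
    hG.card_filter_notMem_le_sum_choose hGc hGa

end MultisetShadow

lemma exists_eq_sum_choose_and_macaulay_eq {h a : ℕ} (ha : h = 0 → a = 0) :
    ∃ b : ℕ → ℕ, a = ∑ j ∈ Finset.range h, (b j).choose (j + 1) ∧
      macaulay h a = ∑ j ∈ Finset.range h, (b j + 1).choose (j + 2) := by
  induction h generalizing a with
  | zero => exact ⟨0, by simp [ha rfl], by simp [macaulay]⟩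
  | succ h ih =>
    rcases Nat.eq_zero_or_pos a with rfl | hpos
    · exact ⟨0, by simp, by simp [macaulay, Nat.choose_eq_zero_of_lt]⟩
    rw [macaulay, if_neg hpos.ne']
    set m := Nat.findGreatest (fun k => k.choose (h + 1) ≤ a) (a + h + 1)
    have hle : m.choose (h + 1) ≤ a :=
      Nat.findGreatest_spec (P := fun k => k.choose (h + 1) ≤ a) (Nat.zero_le _) (by simp)
    have hrest : h = 0 → a - m.choose (h + 1) = 0 := by
      rintro rfl
      have ham : a ≤ m := Nat.le_findGreatest (by omega) (by simp)
      simpa [Nat.sub_eq_zero_iff_le] using ham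
    obtain ⟨b, hb, hb'⟩ := ih hrest
    have hupdate : ∀ j ∈ Finset.range h, Function.update b h m j = b j := fun j hj =>
      Function.update_of_ne (Finset.mem_range.1 hj).ne _ _
    refine ⟨Function.update b h m, ?_, ?_⟩
    · rw [Finset.sum_range_succ, Function.update_self,
        Finset.sum_congr rfl fun j hj => by rw [hupdate j hj], ← hb, Nat.sub_add_cancel hle]
    · rw [Finset.sum_range_succ, Function.update_self,
        Finset.sum_congr rfl fun j hj => by rw [hupdate j hj], ← hb', add_comm]

theorem card_le_macaulay_of_card_multisetShadow_le {α : Type*} [DecidableEq α] {k d : ℕ}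
    (hk : k ≠ 0) {F : Finset (Multiset α)} (hF : ∀ m ∈ F, m.card = k + 1)
    (hd : #(multisetShadow F) ≤ d) : #F ≤ macaulay k d := by
  obtain ⟨a, rfl, hmac⟩ := exists_eq_sum_choose_and_macaulay_eq (a := d) (absurd · hk)
  exact hmac ▸ card_le_sum_choose_of_card_multisetShadow_le hF hd

lemma linearIndepOn_of_notMem_span_image_lt {K ι κ V : Type*} [DivisionRing K] [AddCommGroup V]
    [Module K V] [LinearOrder κ] {key : ι → κ} (hkey : Function.Injective key) {f : ι → V}
    {S : Set ι}
    (hS : ∀ i ∈ S, f i ∉ Submodule.span K (f '' {j ∈ S | key j < key i})) :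
    LinearIndepOn K f S := by
  classical
  rw [linearIndepOn_iff_linearIndepOn_finset]
  intro t ht
  induction t using Finset.induction_on_max_value key with
  | empty => simp
  | insert i t hit hmax ih =>
    rw [Finset.coe_insert, Set.insert_subset_iff] at ht
    rw [Finset.coe_insert]
    refine (ih ht.2).insert fun hspan => hS i ht.1 (Submodule.span_mono ?_ hspan)
    refine Set.image_mono fun j hj => ⟨ht.2 hj, (hmax j hj).lt_of_ne fun h => hit ?_⟩
    exact hkey h ▸ hj

lemma span_image_notMem_span_image_lt {K ι κ V : Type*} [Semiring K] [AddCommMonoid V]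
    [Module K V] [Preorder κ] [WellFoundedLT κ] (key : ι → κ) (f : ι → V) (T : Set ι) :
    Submodule.span K
        (f '' {i ∈ T | f i ∉ Submodule.span K (f '' {j ∈ T | key j < key i})}) =
      Submodule.span K (f '' T) := by
  refine le_antisymm (Submodule.span_mono (Set.image_mono (Set.sep_subset _ _)))
    (Submodule.span_le.2 ?_)
  rintro _ ⟨i, hi, rfl⟩
  induction hc : key i using WellFoundedLT.induction generalizing i with
  | _ c ih =>
    subst hc
    by_cases hspan : f i ∈ Submodule.span K (f '' {j ∈ T | key j < key i})
    · refine Submodule.span_le.2 ?_ hspan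
      rintro _ ⟨j, ⟨hj, hlt⟩, rfl⟩
      exact ih _ hlt j hj rfl
    · exact Submodule.subset_span ⟨i, ⟨hi, hspan⟩, rfl⟩

lemma span_range_pow {K R ι : Type*} [CommSemiring K] [CommSemiring R] [Algebra K R] (v : ι → R)
    (i : ℕ) :
    Submodule.span K (Set.range v) ^ i =
      Submodule.span K ((fun s : Multiset ι => (s.map v).prod) '' {s | s.card = i}) := by
  induction i with
  | zero => simp [Submodule.one_eq_span]
  | succ i ih =>
    rw [pow_succ', ih, Submodule.span_mul_span]
    congr 1
    ext r
    simp only [Set.mem_mul, Set.mem_range, Set.mem_image, Set.mem_ofPred_eq]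
    constructor
    · rintro ⟨_, ⟨z, rfl⟩, _, ⟨s, hs, rfl⟩, rfl⟩
      exact ⟨z ::ₘ s, by simp [hs], by simp⟩
    · rintro ⟨s, hs, rfl⟩
      obtain ⟨z, t, rfl, ht⟩ := Multiset.card_eq_succ_iff.1 hs
      exact ⟨v z, ⟨z, rfl⟩, _, ⟨t, ht, rfl⟩, by simp⟩

section StandardMonomials

/-- The exponent vector of a monomial, ordered lexicographically. -/
noncomputable def lexExponent {ι : Type*} [DecidableEq ι] (s : Multiset ι) : Lex (ι →₀ ℕ) :=
  toLex (Multiset.toFinsupp s)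

lemma lexExponent_injective {ι : Type*} [DecidableEq ι] :
    Function.Injective (lexExponent (ι := ι)) :=
  toLex.injective.comp Multiset.toFinsupp.injective

lemma lexExponent_cons_lt_cons {ι : Type*} [LinearOrder ι] {s t : Multiset ι} (z : ι)
    (h : lexExponent s < lexExponent t) : lexExponent (z ::ₘ s) < lexExponent (z ::ₘ t) := by
  simp only [lexExponent, ← Multiset.singleton_add, map_add, toLex_add]
  exact add_lt_add_right h _

variable (K : Type*) {R ι : Type*} [Field K] [CommRing R] [Algebra K R] [LinearOrder ι]
  (v : ι → R)

/-- A monomial in the elements `v j` of an algebra is standard if it is not a linear combination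
of lexicographically smaller monomials of the same degree. A multiset `s` stands for the monomial
`∏ j ∈ s, v j`. -/
def IsStandardMonomial (s : Multiset ι) : Prop :=
  (s.map v).prod ∉ Submodule.span K ((fun t : Multiset ι => (t.map v).prod) ''
    {t ∈ {t | t.card = s.card} | lexExponent t < lexExponent s})

variable {K v} in
lemma IsStandardMonomial.of_cons {z : ι} {s : Multiset ι}
    (hs : IsStandardMonomial K v (z ::ₘ s)) : IsStandardMonomial K v s := by
  refine fun hspan => hs ?_
  have hmul := Submodule.mem_map_of_mem (f := LinearMap.mulLeft K (v z)) hspan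
  rw [Submodule.map_span, LinearMap.mulLeft_apply, ← Multiset.prod_cons,
    ← Multiset.map_cons] at hmul
  refine Submodule.span_mono ?_ hmul
  rintro _ ⟨_, ⟨t, ⟨hcard, hlt⟩, rfl⟩, rfl⟩
  refine ⟨z ::ₘ t, ⟨?_, lexExponent_cons_lt_cons z hlt⟩, by simp⟩
  exact (Multiset.card_cons _ _).trans (congrArg (· + 1) hcard) |>.trans
    (Multiset.card_cons _ _).symm

variable [Fintype ι]

open Classical in
/-- The standard monomials of degree `i` in the elements `v j`; they form a basis of the `i`-th
power of the span of these elements. -/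
noncomputable def standardMonomials (i : ℕ) : Finset (Multiset ι) :=
  {s ∈ Finset.univ.image ((↑) : Sym ι i → Multiset ι) | IsStandardMonomial K v s}

variable {K v} in
lemma mem_standardMonomials {i : ℕ} {s : Multiset ι} :
    s ∈ standardMonomials K v i ↔ s.card = i ∧ IsStandardMonomial K v s := by
  simp only [standardMonomials, Finset.mem_filter, Finset.mem_image, Finset.mem_univ, true_and]
  exact and_congr_left fun _ => ⟨fun ⟨t, ht⟩ => ht ▸ t.2, fun h => ⟨⟨s, h⟩, rfl⟩⟩

lemma multisetShadow_standardMonomials_subset (i : ℕ) :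
    multisetShadow (standardMonomials K v (i + 1)) ⊆ standardMonomials K v i := by
  intro s hs
  obtain ⟨z, hz⟩ := mem_multisetShadow.1 hs
  obtain ⟨hcard, hstd⟩ := mem_standardMonomials.1 hz
  exact mem_standardMonomials.2 ⟨by simpa using hcard, hstd.of_cons⟩

lemma card_standardMonomials (i : ℕ) :
    #(standardMonomials K v i) = Module.finrank K ↥(Submodule.span K (Set.range v) ^ i) := by
  have hset : (standardMonomials K v i : Set (Multiset ι)) =
      {s ∈ {s | s.card = i} | (s.map v).prod ∉
        Submodule.span K ((fun t : Multiset ι => (t.map v).prod) ''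
          {t ∈ {t | t.card = i} | lexExponent t < lexExponent s})} := by
    ext s
    rw [Finset.mem_coe, mem_standardMonomials]
    exact and_congr_right fun hs => by rw [IsStandardMonomial, hs]
  have hindep : LinearIndepOn K (fun s : Multiset ι => (s.map v).prod)
      (standardMonomials K v i : Set (Multiset ι)) := by
    refine linearIndepOn_of_notMem_span_image_lt lexExponent_injective fun s hs hspan => ?_
    obtain ⟨hcard, hstd⟩ := mem_standardMonomials.1 hs
    refine hstd (Submodule.span_mono (Set.image_mono fun t ht => ?_) hspan)
    exact ⟨(mem_standardMonomials.1 ht.1).1.trans hcard.symm, ht.2⟩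
  rw [span_range_pow, ← span_image_notMem_span_image_lt lexExponent, ← hset, Set.image_eq_range,
    finrank_span_eq_card hindep]
  exact (Fintype.card_coe _).symm

end StandardMonomials

theorem stmt2_general {K R : Type*} [Field K] [CommRing R] [Nontrivial R] [Algebra K R]
    {V : Submodule K R} (hV : V.FG) :
    Module.finrank K ↥(V ^ 0) = 1 ∧ ∀ i : ℕ, 1 ≤ i →
      Module.finrank K ↥(V ^ (i + 1)) ≤ macaulay i (Module.finrank K ↥(V ^ i)) := by
  refine ⟨?_, fun i hi => ?_⟩
  · rw [pow_zero, Submodule.one_eq_span, finrank_span_singleton one_ne_zero]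
  · obtain ⟨n, v, rfl⟩ := Submodule.fg_iff_exists_fin_generating_family.1 hV
    rw [← card_standardMonomials, ← card_standardMonomials]
    exact card_le_macaulay_of_card_multisetShadow_le (Nat.one_le_iff_ne_zero.1 hi)
      (fun s hs => (mem_standardMonomials.1 hs).1)
      (Finset.card_le_card (multisetShadow_standardMonomials_subset K v i))

/-- Macaulay's inequality for Hilbert functions. Let `R = ⊕_{i≥0} R_i` be a standard
graded algebra over a field `K`: a commutative graded `K`-algebra, generated by `R_1`,
with `R_0 = K` and each `R_i` finite-dimensional over `K`. Standardness (including
`R_0 = K·1 = K`) is encoded by `𝒜 i = (𝒜 1)^i` for all `i` (products of submodules;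
`(𝒜 1)^0 = 1` is the line `K·1`). If `d_i = dim_K R_i` is the Hilbert function, then
`d_0 = 1`, and `d_{i+1} ≤ d_i^⟨i⟩` for all `i ≥ 1`. -/
theorem stmt2 (K R : Type*) [Field K] [CommRing R] [Nontrivial R] [Algebra K R]
    (𝒜 : ℕ → Submodule K R) [GradedAlgebra 𝒜]
    (hstd : ∀ i : ℕ, 𝒜 i = 𝒜 1 ^ i)
    (hfin : ∀ i : ℕ, FiniteDimensional K ↥(𝒜 i))
    (d : ℕ → ℕ) (hd : ∀ i : ℕ, d i = Module.finrank K ↥(𝒜 i)) :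
    d 0 = 1 ∧ ∀ i : ℕ, 1 ≤ i → d (i + 1) ≤ macaulay i (d i) := by
  obtain rfl : d = fun i => Module.finrank K ↥(𝒜 1 ^ i) := funext fun i => by rw [hd, hstd i]
  exact stmt2_general (Module.Finite.iff_fg.1 (hfin 1))
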